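/- Let N ≥ 1 and 0 ≤ n ≤ N. Let F: ℂ^N → ℂ^{N−n} be a polynomial map with real coefficients, and let x₀ ∈ ℝ^N satisfy F(x₀) = 0 and suppose the Jacobian matrix of F at x₀ has rank N−n. Then there exists a Euclidean-open neighborhood W of x₀ in ℂ^N such that every polynomial P ∈ ℂ[x₁,…,x_N] vanishing at every point of F⁻¹(0) ∩ W ∩ ℝ^N vanishes at every point of F⁻¹(0) ∩ W. -/

import Mathlib

open MvPolynomial

open Matrix in
lemma exists_real_right_inv {N m : ℕ} (M : Matrix (Fin m) (Fin N) ℂ)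
    (hre : ∀ j i, star (M j i) = M j i) (hr : M.rank = m) :
    ∃ R : Matrix (Fin N) (Fin m) ℂ, (∀ i j, star (R i j) = R i j) ∧ M * R = 1 := by
  have hs : Function.Surjective M.mulVec := by
    have h1 : LinearMap.range M.mulVecLin = ⊤ := by
      apply Submodule.eq_top_of_finrank_eq
      rw [Matrix.rank] at hr
      simpa using hr
    exact LinearMap.range_eq_top.1 h1
  obtain ⟨C, hC⟩ := Matrix.mulVec_surjective_iff_exists_right_inverse.1 hs
  have hC' : M * C.map star = 1 := by
    have h2 : M.map star = M := by ext j i; exact hre j i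
    have h3 : (M * C).map (starRingEnd ℂ) = M.map (starRingEnd ℂ) * C.map (starRingEnd ℂ) :=
      Matrix.map_mul
    change (M * C).map star = M.map star * C.map star at h3
    rw [h2, hC] at h3
    rw [← h3]
    ext a b
    simp [Matrix.one_apply, apply_ite]
  refine ⟨(1/2 : ℂ) • (C + C.map star), ?_, ?_⟩
  · intro i j
    simp [add_comm]
  · rw [Matrix.mul_smul, Matrix.mul_add, hC, hC', ← two_smul ℂ (1 : Matrix (Fin m) (Fin m) ℂ),
      smul_smul]
    norm_num

lemma star_mulVec_real {N m : ℕ} (M : Matrix (Fin m) (Fin N) ℂ)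
    (hre : ∀ j i, star (M j i) = M j i) (z : Fin N → ℂ) :
    M.mulVec (star z) = star (M.mulVec z) := by
  ext j
  simp only [Matrix.mulVec, dotProduct, Pi.star_apply, star_sum, star_mul', hre]

lemma hasFDerivAt_aeval {N : ℕ} (p : MvPolynomial (Fin N) ℝ) (x : Fin N → ℂ) :
    HasFDerivAt (𝕜 := ℂ) (fun z : Fin N → ℂ => aeval z p)
      (∑ i, (aeval x (pderiv i p)) • (ContinuousLinearMap.proj i : (Fin N → ℂ) →L[ℂ] ℂ)) x := by
  induction p using MvPolynomial.induction_on with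
  | C a =>
    have h := hasFDerivAt_const (𝕜 := ℂ) (a : ℂ) x
    have e : (fun z : Fin N → ℂ => aeval z (C a : MvPolynomial (Fin N) ℝ)) = fun _ => (a : ℂ) := by
      funext z; simp
    rw [e]
    refine h.congr_fderiv ?_
    ext v
    simp
  | add p q hp hq =>
    have e : (fun z : Fin N → ℂ => aeval z (p + q)) =
        (fun z : Fin N → ℂ => aeval z p) + (fun z : Fin N → ℂ => aeval z q) := by
      funext z; simp
    rw [e]
    refine (hp.add hq).congr_fderiv ?_
    refine ContinuousLinearMap.ext fun v => ?_
    simp [add_mul, Finset.sum_add_distrib]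
  | mul_X p n hp =>
    have h := hp.mul (hasFDerivAt_apply (𝕜 := ℂ) n x)
    have e : (fun z : Fin N → ℂ => aeval z (p * X n)) =
        (fun z : Fin N → ℂ => aeval z p) * (fun z : Fin N → ℂ => z n) := by
      funext z; simp
    rw [e]
    refine h.congr_fderiv ?_
    have e2 : ∀ i, aeval x (pderiv i (p * X n)) =
        (if i = n then aeval x p else 0) + x n * aeval x (pderiv i p) := by
      intro i
      rw [pderiv_mul, pderiv_X, map_add, map_mul, map_mul, aeval_X]
      by_cases h : i = n
      · subst h; simp; ring
      · rw [Pi.single_eq_of_ne (Ne.symm h)]; simp [h]; ring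
    refine ContinuousLinearMap.ext fun v => ?_
    simp only [e2]
    simp [add_mul, Finset.sum_add_distrib, Finset.mul_sum, mul_assoc]

lemma aeval_star {N : ℕ} (p : MvPolynomial (Fin N) ℝ) (z : Fin N → ℂ) :
    aeval (star z) p = star (aeval z p) := by
  induction p using MvPolynomial.induction_on with
  | C a => simp
  | add p q hp hq => simp only [map_add, hp, hq, star_add]
  | mul_X p n hp => simp only [map_mul, hp, star_mul', aeval_X, Pi.star_apply]

open scoped ContDiff Topology in
open Matrix Filter in
lemma core_local {N m : ℕ} (M : Matrix (Fin m) (Fin N) ℂ) (R : Matrix (Fin N) (Fin m) ℂ)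
    (hM : ∀ z, M *ᵥ star z = star (M *ᵥ z)) (hR : ∀ z, R *ᵥ star z = star (R *ᵥ z))
    (hMR : M * R = 1) (f : (Fin N → ℂ) → (Fin m → ℂ)) (hf : ContDiff ℂ ω f)
    (hfs : ∀ z, f (star z) = star (f z)) (x₀ : Fin N → ℂ) (hx : star x₀ = x₀) (hfx : f x₀ = 0)
    (hd : HasFDerivAt f (M.mulVecLin.toContinuousLinearMap) x₀) :
    ∃ W : Set (Fin N → ℂ), IsOpen W ∧ x₀ ∈ W ∧ ∀ P : (Fin N → ℂ) → ℂ, Differentiable ℂ P →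
      (∀ z ∈ W, f z = 0 → star z = z → P z = 0) → ∀ z ∈ W, f z = 0 → P z = 0 := by
  set Mc := M.mulVecLin.toContinuousLinearMap with hMc
  set Rc := R.mulVecLin.toContinuousLinearMap with hRc
  have hMa : ∀ z, Mc z = M *ᵥ z := fun z => rfl
  have hRa : ∀ z, Rc z = R *ᵥ z := fun z => rfl
  have hMRa : ∀ z, Mc (Rc z) = z := fun z => by
    rw [hMa, hRa, Matrix.mulVec_mulVec, hMR, Matrix.one_mulVec]
  let G : (Fin N → ℂ) → (Fin N → ℂ) := fun z => z + Rc (f z - Mc z)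
  have hG : ContDiff ℂ ω G := contDiff_id.add (Rc.contDiff.comp (hf.sub Mc.contDiff))
  have hGd : HasFDerivAt G
      ((ContinuousLinearEquiv.refl ℂ (Fin N → ℂ) : (Fin N → ℂ) →L[ℂ] (Fin N → ℂ))) x₀ := by
    have h := (hasFDerivAt_id (𝕜 := ℂ) x₀).add
      (Rc.hasFDerivAt.comp x₀ (hd.sub (Mc.hasFDerivAt (x := x₀))))
    refine HasFDerivAt.congr_fderiv (f := G) h ?_
    rw [sub_self, ContinuousLinearMap.comp_zero, add_zero]
    rfl
  have hGs : ∀ z, G (star z) = star (G z) := fun z => by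
    simp only [G, hMa, hRa, hM, hfs, star_add]
    rw [← star_sub, hR]
  have hMG : ∀ z, Mc (G z) = f z := fun z => by
    simp only [G, map_add, hMRa]; abel
  have hω : (ω : WithTop ℕ∞) ≠ 0 := by simp
  let φ := (hG.contDiffAt (x := x₀)).toOpenPartialHomeomorph G hGd hω
  have hφ : ∀ z, φ z = G z := fun z => rfl
  have hxs : x₀ ∈ φ.source := (hG.contDiffAt (x := x₀)).mem_toOpenPartialHomeomorph_source hGd hω
  have hyt : G x₀ ∈ φ.target := φ.map_source hxs
  have hsx : φ.symm (G x₀) = x₀ := φ.left_inv hxs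
  have hsm : ContDiffAt ℂ ω φ.symm (G x₀) := (hG.contDiffAt (x := x₀)).to_localInverse hGd hω
  have hy0 : star (G x₀) = G x₀ := by rw [← hGs, hx]
  have e1 : ∀ᶠ y in 𝓝 (G x₀), y ∈ φ.target := φ.open_target.mem_nhds hyt
  have e2 : ∀ᶠ y in 𝓝 (G x₀), AnalyticAt ℂ φ.symm y := hsm.analyticAt.eventually_analyticAt
  have e3 : ∀ᶠ y in 𝓝 (G x₀), star (φ.symm y) ∈ φ.source := by
    have : ContinuousAt (fun y => star (φ.symm y)) (G x₀) := hsm.continuousAt.star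
    apply this.eventually_mem
    rw [hsx, hx]
    exact φ.open_source.mem_nhds hxs
  obtain ⟨ε, hε, hball⟩ := Metric.eventually_nhds_iff_ball.1 (e1.and (e2.and e3))
  refine ⟨φ.source ∩ G ⁻¹' Metric.ball (G x₀) ε,
    φ.open_source.inter (Metric.isOpen_ball.preimage hG.continuous),
    ⟨hxs, Metric.mem_ball_self hε⟩, ?_⟩
  intro P hP hPz z hz hfz
  -- real points
  have key : ∀ y ∈ Metric.ball (G x₀) ε, star y = y → Mc y = 0 → P (φ.symm y) = 0 := by
    intro y hy hys hMy
    obtain ⟨h1, h2, h3⟩ := hball y hy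
    have hGy : G (φ.symm y) = y := φ.right_inv h1
    apply hPz
    · exact ⟨φ.map_target h1, by rw [Set.mem_preimage, hGy]; exact hy⟩
    · rw [← hMG, hGy, hMy]
    · apply φ.injOn h3 (φ.map_target h1)
      rw [hφ, hφ, hGs, hGy, hys]
  set y := G z with hy
  have hyb : y ∈ Metric.ball (G x₀) ε := hz.2
  have hMy : Mc y = 0 := by rw [hMG, hfz]
  have hMys : Mc (star y) = 0 := by rw [hMa, hM, ← hMa, hMy, star_zero]
  let u : Fin N → ℂ := (1/2 : ℂ) • (y + star y)
  let v : Fin N → ℂ := (-Complex.I/2 : ℂ) • (y - star y)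
  have hu : star u = u := by
    simp [u, add_comm]
  have hv : star v = v := by
    simp only [v, star_smul, star_sub, star_star]
    rw [← neg_sub y (star y), smul_neg, ← neg_smul]
    congr 1
    simp [neg_div]
  have hMu : Mc u = 0 := by simp [u, hMy, hMys]
  have hMv : Mc v = 0 := by simp [v, hMy, hMys]
  have huv : u + Complex.I • v = y := by
    ext i
    simp only [u, v, Pi.add_apply, Pi.smul_apply, Pi.sub_apply, smul_eq_mul]
    linear_combination (-(y i - star y i)/2) * Complex.I_sq
  have hub : u ∈ Metric.ball (G x₀) ε := by
    rw [mem_ball_iff_norm] at hyb ⊢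
    have : u - G x₀ = (1/2 : ℂ) • ((y - G x₀) + star (y - G x₀)) := by
      rw [star_sub, hy0]
      ext i
      simp [u]; ring
    rw [this, norm_smul]
    have h2 := norm_add_le (y - G x₀) (star (y - G x₀))
    rw [norm_star] at h2
    have h3 : ‖(1/2 : ℂ)‖ = 1/2 := by norm_num
    rw [h3]
    linarith
  let ℓ : ℂ → (Fin N → ℂ) := fun t => u + t • v
  have hℓ : Differentiable ℂ ℓ := by fun_prop
  let U : Set ℂ := ℓ ⁻¹' Metric.ball (G x₀) ε
  have hUo : IsOpen U := Metric.isOpen_ball.preimage hℓ.continuous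
  have hUc : Convex ℝ U := by
    intro a ha b hb s t hs ht hst
    have := (convex_ball (G x₀) ε) ha hb hs ht hst
    change ℓ _ ∈ Metric.ball (G x₀) ε
    convert this using 1
    ext i
    have hst' : (s : ℂ) + t = 1 := by exact_mod_cast hst
    simp [ℓ]
    linear_combination (-u i) * hst'
  have h0 : (0 : ℂ) ∈ U := by simpa [U, ℓ] using hub
  have hI : Complex.I ∈ U := by
    change u + Complex.I • v ∈ Metric.ball (G x₀) ε
    rw [huv]; exact hyb
  have hg : DifferentiableOn ℂ (fun t => P (φ.symm (ℓ t))) U := by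
    intro t ht
    have h2 := (hball (ℓ t) ht).2.1.differentiableAt
    exact ((hP _).comp t (h2.comp t (hℓ t))).differentiableWithinAt
  have hfreq : ∃ᶠ t in 𝓝[≠] (0 : ℂ), P (φ.symm (ℓ t)) = 0 := by
    have hT : Tendsto (fun s : ℝ => (s : ℂ)) (𝓝[≠] 0) (𝓝[≠] 0) := by
      apply tendsto_nhdsWithin_of_tendsto_nhds_of_eventually_within
      · have : Tendsto (fun s : ℝ => (s : ℂ)) (𝓝 0) (𝓝 0) := by
          simpa using Complex.continuous_ofReal.tendsto 0
        exact this.mono_left nhdsWithin_le_nhds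
      · filter_upwards [self_mem_nhdsWithin] with s hs
        simpa using hs
    apply hT.frequently
    apply Eventually.frequently
    have : ∀ᶠ s : ℝ in 𝓝[≠] (0 : ℝ), (s : ℂ) ∈ U :=
      hT (nhdsWithin_le_nhds (hUo.mem_nhds h0))
    filter_upwards [this] with s hs
    apply key _ hs
    · simp [ℓ, hu, hv]
    · simp [ℓ, hMu, hMv]
  have := (hg.analyticOnNhd hUo).eqOn_zero_of_preconnected_of_frequently_eq_zero
    hUc.isPreconnected h0 hfreq hI
  simp only [ℓ, huv, Pi.zero_apply] at this
  rwa [show φ.symm y = z from φ.left_inv hz.1] at this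

/-- Local implicit-function-theorem step: if `F : ℂ^N → ℂ^{N−n}` is a polynomial map with
real coefficients, `x₀` is a real zero of `F`, and the Jacobian of `F` at `x₀` has rank
`N − n`, then on some Euclidean neighborhood `W` of `x₀`, any complex polynomial vanishing
on the real points of `F⁻¹(0) ∩ W` vanishes on all of `F⁻¹(0) ∩ W`. -/
theorem polynomial_vanishing_on_real_zeros_vanishes_locally
    (N nd : ℕ) (hN : 1 ≤ N) (hnd : nd ≤ N)
    (F : Fin (N - nd) → MvPolynomial (Fin N) ℝ)
    (x₀ : Fin N → ℂ) (hx₀R : ∀ i, (x₀ i).im = 0)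
    (hx₀F : ∀ j, MvPolynomial.aeval x₀ (F j) = 0)
    (hJac : (Matrix.of fun (j : Fin (N - nd)) (i : Fin N) =>
        MvPolynomial.aeval x₀ (MvPolynomial.pderiv i (F j))).rank = N - nd) :
    ∃ W : Set (Fin N → ℂ), IsOpen W ∧ x₀ ∈ W ∧
      ∀ P : MvPolynomial (Fin N) ℂ,
        (∀ z ∈ W, (∀ j, MvPolynomial.aeval z (F j) = 0) → (∀ i, (z i).im = 0) →
          MvPolynomial.eval z P = 0) →
        ∀ z ∈ W, (∀ j, MvPolynomial.aeval z (F j) = 0) → MvPolynomial.eval z P = 0 := by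
  have hstar : ∀ z : Fin N → ℂ, star z = z ↔ ∀ i, (z i).im = 0 := by
    intro z
    rw [funext_iff]
    exact forall_congr' fun i => Complex.conj_eq_iff_im
  have hx := (hstar x₀).2 hx₀R
  set M := (Matrix.of fun (j : Fin (N - nd)) (i : Fin N) =>
        MvPolynomial.aeval x₀ (MvPolynomial.pderiv i (F j))) with hM
  have hMre : ∀ j i, star (M j i) = M j i := by
    intro j i
    simp only [hM, Matrix.of_apply]
    rw [← aeval_star, hx]
  obtain ⟨R, hRre, hMR⟩ := exists_real_right_inv M hMre hJac
  obtain ⟨W, hW, hxW, h⟩ := core_local M R (star_mulVec_real M hMre) (star_mulVec_real R hRre) hMR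
    (fun z j => aeval z (F j))
    (by
      rw [contDiff_pi]
      intro j
      have : AnalyticOnNhd ℂ (fun z : Fin N → ℂ => aeval z (F j)) Set.univ := fun z _ =>
        AnalyticAt.aeval_mvPolynomial
          (fun i => (ContinuousLinearMap.proj (R := ℂ) (φ := fun _ : Fin N => ℂ) i).analyticAt z)
          (F j)
      exact contDiffOn_univ.1 (this.contDiffOn uniqueDiffOn_univ))
    (fun z => by ext j; exact aeval_star (F j) z) x₀ hx (by ext j; exact hx₀F j)
    (by
      rw [hasFDerivAt_pi']
      intro j
      refine (hasFDerivAt_aeval (F j) x₀).congr_fderiv ?_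
      ext v
      simp [hM, Matrix.mulVec, dotProduct])
  refine ⟨W, hW, hxW, fun P hP z hz hFz => ?_⟩
  refine h (fun z => eval z P) ?_ ?_ z hz (by ext j; exact hFz j)
  · have : AnalyticOnNhd ℂ (fun z : Fin N → ℂ => eval z P) Set.univ := fun z _ => by
      have := AnalyticAt.aeval_mvPolynomial
          (fun i => (ContinuousLinearMap.proj (R := ℂ) (φ := fun _ : Fin N => ℂ) i).analyticAt z) P
      simpa [MvPolynomial.aeval_eq_eval] using this
    exact differentiableOn_univ.1 this.differentiableOn
  · intro z hz hfz hs
    exact hP z hz (fun j => congrFun hfz j) ((hstar z).1 hs)
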